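/- Let X = (X_t)_{t≥0} be a real-valued additive process (X_0 = 0, independent increments, continuous in probability, cadlag paths) with E[X_t] = 0 and E[|X_t|^n] < ∞ for all n ≥ 1 and t ≥ 0. Then for every n ≥ 1 the process M^(n)_t = Γ_n(X_t, −F_2(t), −F_3(t), …, −F_n(t)) is a martingale with respect to the natural filtration of X. -/

import Mathlib

open MeasureTheory ProbabilityTheory Filter Topology
open scoped NNReal

/-- The Kendall polynomials `Γ_n`, expressing moments in terms of cumulants:
`Γ_0 = 1` and `Γ_{n+1}(x_1,…,x_{n+1}) = Σ_{j=0}^n C(n,j) Γ_j(x_1,…,x_j) x_{n+1-j}`.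
The argument function `x : ℕ → ℝ` encodes the variables `x_1, x_2, …`
(only the values `x 1, …, x n` are used by `kendall n x`). -/
noncomputable def kendall : ℕ → (ℕ → ℝ) → ℝ
  | 0, _ => 1
  | n + 1, x =>
      ∑ j ∈ (Finset.range (n + 1)).attach,
        (n.choose j.1 : ℝ) * kendall j.1 x * x (n + 1 - j.1)
decreasing_by exact Finset.mem_range.mp j.2

/-- A function `f : ℝ≥0 → ℝ` is cadlag: right-continuous with left limits. -/
def IsCadlag (f : ℝ≥0 → ℝ) : Prop :=
  (∀ t : ℝ≥0, ContinuousWithinAt f (Set.Ici t) t) ∧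
    ∀ t : ℝ≥0, 0 < t → ∃ l : ℝ, Tendsto f (𝓝[<] t) (𝓝 l)

lemma kendall_zero' (x : ℕ → ℝ) : kendall 0 x = 1 := by
  rw [kendall]

lemma kendall_succ' (n : ℕ) (x : ℕ → ℝ) : kendall (n + 1) x =
    ∑ j ∈ Finset.range (n + 1), (n.choose j : ℝ) * kendall j x * x (n + 1 - j) := by
  rw [kendall]
  exact Finset.sum_attach (Finset.range (n + 1))
    (fun j => (n.choose j : ℝ) * kendall j x * x (n + 1 - j))

/-- exponential generating series -/
noncomputable def egf (a : ℕ → ℝ) : PowerSeries ℝ :=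
  PowerSeries.mk fun n => a n / (n.factorial : ℝ)

lemma egf_mul (a b : ℕ → ℝ) : egf a * egf b =
    egf fun n => ∑ j ∈ Finset.range (n + 1), (n.choose j : ℝ) * a j * b (n - j) := by
  ext n
  simp only [egf, PowerSeries.coeff_mul, PowerSeries.coeff_mk]
  rw [Finset.Nat.sum_antidiagonal_eq_sum_range_succ
    (fun i j => a i / (i.factorial : ℝ) * (b j / (j.factorial : ℝ))), Finset.sum_div]
  refine Finset.sum_congr rfl fun j hj => ?_
  have hj' : j ≤ n := Nat.lt_succ_iff.mp (Finset.mem_range.mp hj)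
  rw [Nat.cast_choose ℝ hj']
  have h1 : (n.factorial : ℝ) ≠ 0 := by positivity
  have h2 : (j.factorial : ℝ) ≠ 0 := by positivity
  have h3 : ((n - j).factorial : ℝ) ≠ 0 := by positivity
  field_simp

lemma egf_deriv (a : ℕ → ℝ) :
    PowerSeries.derivative ℝ (egf a) = egf fun n => a (n + 1) := by
  ext n
  simp only [egf, PowerSeries.coeff_derivative, PowerSeries.coeff_mk, Nat.factorial_succ]
  have h1 : (n.factorial : ℝ) ≠ 0 := by positivity
  push_cast
  field_simp

lemma egf_inj {a b : ℕ → ℝ} (h : egf a = egf b) (n : ℕ) : a n = b n := by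
  have := congrArg (PowerSeries.coeff n) h
  simp only [egf, PowerSeries.coeff_mk] at this
  have h1 : (n.factorial : ℝ) ≠ 0 := by positivity
  field_simp at this
  exact this

lemma kendall_deriv (x : ℕ → ℝ) :
    PowerSeries.derivative ℝ (egf fun n => kendall n x) =
      (egf fun n => kendall n x) * egf fun n => x (n + 1) := by
  rw [egf_deriv, egf_mul]
  congr 1
  ext n
  rw [kendall_succ']
  refine Finset.sum_congr rfl fun j hj => ?_
  have hj' : j ≤ n := Nat.lt_succ_iff.mp (Finset.mem_range.mp hj)
  rw [show n + 1 - j = n - j + 1 by omega]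

lemma kendall_unique (x b : ℕ → ℝ) (h0 : b 0 = 1)
    (hb : PowerSeries.derivative ℝ (egf b) = egf b * egf fun n => x (n + 1)) (n : ℕ) :
    b n = kendall n x := by
  induction n using Nat.strong_induction_on with
  | _ n ih =>
    cases n with
    | zero => rw [h0, kendall_zero']
    | succ n =>
      rw [egf_deriv, egf_mul] at hb
      have := egf_inj hb n
      rw [this, kendall_succ']
      refine Finset.sum_congr rfl fun j hj => ?_
      have hj' : j < n + 1 := Finset.mem_range.mp hj
      rw [ih j hj', show n + 1 - j = n - j + 1 by omega]

lemma kendall_add (x y : ℕ → ℝ) (n : ℕ) : kendall n (x + y) =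
    ∑ j ∈ Finset.range (n + 1), (n.choose j : ℝ) * kendall j x * kendall (n - j) y := by
  symm
  refine kendall_unique (x + y) (fun n => ∑ j ∈ Finset.range (n + 1),
    (n.choose j : ℝ) * kendall j x * kendall (n - j) y) (by simp [kendall_zero']) ?_ n
  rw [← egf_mul (fun n => kendall n x) (fun n => kendall n y), Derivation.leibniz,
    kendall_deriv, kendall_deriv]
  have : (egf fun n => (x + y) (n + 1)) = (egf fun n => x (n + 1)) + egf fun n => y (n + 1) := by
    ext n
    simp [egf, add_div]
  rw [this, smul_eq_mul, smul_eq_mul]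
  ring

/-- the sequence `(x, 0, 0, …)` -/
noncomputable def single1 (x : ℝ) : ℕ → ℝ := fun k => if k = 1 then x else 0

lemma kendall_single1 (x : ℝ) (n : ℕ) : kendall n (single1 x) = x ^ n := by
  induction n with
  | zero => simp [kendall_zero']
  | succ n ih =>
    rw [kendall_succ', Finset.sum_eq_single n]
    · simp [single1, ih, pow_succ]
    · intro j hj hne
      have : n + 1 - j ≠ 1 := by have := Finset.mem_range.mp hj; omega
      simp [single1, this]
    · simp

lemma kendall_const_zero (n : ℕ) (hn : n ≠ 0) : kendall n 0 = 0 := by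
  have : (0 : ℕ → ℝ) = single1 0 := by ext k; simp [single1]
  rw [this, kendall_single1, zero_pow hn]

lemma kendall_single1_add (x : ℝ) (y : ℕ → ℝ) (n : ℕ) : kendall n (single1 x + y) =
    ∑ j ∈ Finset.range (n + 1), (n.choose j : ℝ) * x ^ j * kendall (n - j) y := by
  rw [kendall_add]; simp_rw [kendall_single1]

/-- moments of the increment -/
lemma binom_cancel (m e : ℕ → ℝ) (c d : ℕ → ℝ) (hm : ∀ n, m n = kendall n c)
    (h : ∀ n, ∑ j ∈ Finset.range (n + 1), (n.choose j : ℝ) * m j * e (n - j)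
      = kendall n (c + d)) (n : ℕ) : e n = kendall n d := by
  have h0 : egf m ≠ 0 := by
    intro h0
    have := congrArg (PowerSeries.coeff 0) h0
    simp [egf, hm, kendall_zero'] at this
  refine egf_inj (a := e) (b := fun n => kendall n d) (mul_left_cancel₀ h0 ?_) n
  rw [egf_mul, egf_mul]
  congr 1
  ext n
  rw [h, kendall_add]
  simp_rw [hm]

section
variable {Ω : Type*} {mΩ : MeasurableSpace Ω} {μ : Measure Ω} [IsProbabilityMeasure μ]

lemma memLp_of_pow {f : Ω → ℝ} (hf : AEStronglyMeasurable f μ)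
    (h : ∀ n : ℕ, Integrable (fun ω => |f ω| ^ n) μ) (n : ℕ) : MemLp f n μ := by
  rcases Nat.eq_zero_or_pos n with rfl | hn
  · simpa using hf
  · rw [← integrable_norm_rpow_iff hf (by exact_mod_cast hn.ne') (by simp)]
    simpa using h n

lemma integrable_pow_of_memLp {f : Ω → ℝ} (h : ∀ n : ℕ, MemLp f n μ) (n : ℕ) :
    Integrable (fun ω => f ω ^ n) μ := by
  refine ((h n).integrable_norm_pow').mono ((h 1).1.pow n) ?_
  filter_upwards with ω
  simp

lemma integrable_kendall {f : Ω → ℝ} (h : ∀ n : ℕ, Integrable (fun ω => f ω ^ n) μ)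
    (y : ℕ → ℝ) (n : ℕ) : Integrable (fun ω => kendall n (single1 (f ω) + y)) μ := by
  simp_rw [kendall_single1_add]
  exact integrable_finsetSum _ fun j _ => ((h j).const_mul _).mul_const _

lemma integral_kendall {f : Ω → ℝ} (h : ∀ n : ℕ, Integrable (fun ω => f ω ^ n) μ)
    (d : ℕ → ℝ) (hd : ∀ n, ∫ ω, f ω ^ n ∂μ = kendall n d) (n : ℕ) (hn : n ≠ 0) :
    ∫ ω, kendall n (single1 (f ω) + -d) ∂μ = 0 := by
  simp_rw [kendall_single1_add]
  rw [integral_finsetSum _ fun j _ => ((h j).const_mul _).mul_const _]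
  simp_rw [integral_mul_const, integral_const_mul, hd]
  rw [← kendall_add, add_neg_cancel, kendall_const_zero n hn]

lemma measurable_kendall (y : ℕ → ℝ) (n : ℕ) :
    Measurable (fun x : ℝ => kendall n (single1 x + y)) := by
  simp_rw [kendall_single1_add]
  fun_prop

end

/-- **Theorem 1.** For a centered additive process `X` (independent increments, continuous
in probability, cadlag, `X_0 = 0`) with finite moments of all orders, and cumulant functions
`F_n` determined by the moment–cumulant relations `E[X_t^n] = Γ_n(0, F_2(t), …, F_n(t))`,
the process `M^{(n)}_t = Γ_n(X_t, -F_2(t), …, -F_n(t))` is a martingale with respect to the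
natural filtration of `X`, for every `n ≥ 1`. -/
theorem additive_kendall_martingale
    {Ω : Type*} {mΩ : MeasurableSpace Ω} (μ : Measure Ω) [IsProbabilityMeasure μ]
    (X : ℝ≥0 → Ω → ℝ) (hXmeas : ∀ t, StronglyMeasurable (X t))
    (hX0 : ∀ ω, X 0 ω = 0)
    (hindep : ∀ s t : ℝ≥0, s ≤ t →
      Indep (MeasurableSpace.comap (fun ω => X t ω - X s ω) (inferInstance : MeasurableSpace ℝ))
        (MeasureTheory.Filtration.natural X hXmeas s) μ)
    (hcontP : ∀ (t : ℝ≥0) (ε : ℝ), 0 < ε →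
      Tendsto (fun s => μ {ω | ε ≤ |X s ω - X t ω|}) (𝓝 t) (𝓝 0))
    (hcadlag : ∀ ω, IsCadlag fun t => X t ω)
    (hmom : ∀ (n : ℕ) (t : ℝ≥0), Integrable (fun ω => |X t ω| ^ n) μ)
    (hcent : ∀ t : ℝ≥0, ∫ ω, X t ω ∂μ = 0)
    (F : ℕ → ℝ≥0 → ℝ)
    (hF : ∀ n, 2 ≤ n → ∀ t : ℝ≥0,
      ∫ ω, X t ω ^ n ∂μ = kendall n fun k => if k = 1 then 0 else F k t)
    (n : ℕ) (hn : 1 ≤ n) :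
    Martingale (fun t ω => kendall n fun k => if k = 1 then X t ω else -F k t)
      (MeasureTheory.Filtration.natural X hXmeas) μ := by
  set ℱ := MeasureTheory.Filtration.natural X hXmeas with hℱ
  set c : ℝ≥0 → ℕ → ℝ := fun t k => if k = 1 then 0 else F k t with hc
  have hM : ∀ (n : ℕ) (t : ℝ≥0) (ω : Ω), (kendall n fun k => if k = 1 then X t ω else -F k t)
      = kendall n (single1 (X t ω) + -(c t)) := by
    intro n t ω
    congr 1
    ext k
    by_cases hk : k = 1 <;> simp [single1, hc, hk]
  simp_rw [hM]
  have hm : ∀ (n : ℕ) (t : ℝ≥0), ∫ ω, X t ω ^ n ∂μ = kendall n (c t) := by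
    intro n t
    match n with
    | 0 => simp [kendall_zero']
    | 1 => simp [hcent, kendall_succ', hc]
    | n + 2 => exact hF (n + 2) (by omega) t
  have hLp : ∀ t (n : ℕ), MemLp (X t) n μ := fun t =>
    memLp_of_pow (hXmeas t).aestronglyMeasurable fun n => hmom n t
  have hXint : ∀ t (n : ℕ), Integrable (fun ω => X t ω ^ n) μ := fun t =>
    integrable_pow_of_memLp (hLp t)
  have hAd : ∀ t, Measurable[ℱ t] (X t) := fun t =>
    (Filtration.stronglyAdapted_natural hXmeas t).measurable
  refine ⟨fun t => (Measurable.stronglyMeasurable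
    ((measurable_kendall (-(c t)) n).comp (hAd t))), fun s t hst => ?_⟩
  set D : Ω → ℝ := fun ω => X t ω - X s ω with hD
  have hDint : ∀ n : ℕ, Integrable (fun ω => D ω ^ n) μ :=
    integrable_pow_of_memLp fun n => (hLp t n).sub (hLp s n)
  have hDmeas : Measurable D := (hXmeas t).measurable.sub (hXmeas s).measurable
  have hInd : IndepFun (X s) D μ := by
    rw [IndepFun_iff_Indep]
    exact (indep_of_indep_of_le_right (hindep s t hst) (hAd s).comap_le).symm
  have hsplit : ∀ n ω, X t ω ^ n =
      ∑ j ∈ Finset.range (n + 1), (n.choose j : ℝ) * (X s ω ^ j * D ω ^ (n - j)) := by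
    intro n ω
    rw [show X t ω = X s ω + D ω by simp [hD], add_pow]
    exact Finset.sum_congr rfl fun j _ => by ring
  have hpi : ∀ i j : ℕ, Integrable (fun ω => X s ω ^ i * D ω ^ j) μ := fun i j =>
    (hInd.comp (measurable_id.pow_const i) (measurable_id.pow_const j)).integrable_mul
      (hXint s i) (hDint j)
  have hpe : ∀ i j : ℕ, ∫ ω, X s ω ^ i * D ω ^ j ∂μ = kendall i (c s) * ∫ ω, D ω ^ j ∂μ := by
    intro i j
    rw [← hm]
    exact (hInd.comp (measurable_id.pow_const i)
      (measurable_id.pow_const j)).integral_fun_mul_eq_mul_integral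
      (hXint s i).1 (hDint j).1
  have hDm : ∀ n, ∫ ω, D ω ^ n ∂μ = kendall n (c t - c s) := by
    refine binom_cancel (fun n => kendall n (c s)) (fun n => ∫ ω, D ω ^ n ∂μ) (c s) (c t - c s)
      (fun n => rfl) fun n => ?_
    rw [add_sub_cancel, ← hm]
    simp_rw [hsplit]
    rw [integral_finsetSum _ fun j _ => (hpi j (n - j)).const_mul _]
    simp_rw [integral_const_mul, hpe, mul_assoc]
  -- conditional expectation
  set A : ℕ → Ω → ℝ := fun k ω => kendall k (single1 (X s ω) + -(c s)) with hA
  set B : ℕ → Ω → ℝ := fun k ω => kendall k (single1 (D ω) + -(c t - c s)) with hB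
  have hdec : (fun ω => kendall n (single1 (X t ω) + -(c t))) =
      ∑ j ∈ Finset.range (n + 1), (n.choose j : ℝ) • (A j * B (n - j)) := by
    ext ω
    have : single1 (X t ω) + -(c t) =
        (single1 (X s ω) + -(c s)) + (single1 (D ω) + -(c t - c s)) := by
      ext k
      by_cases hk : k = 1 <;> simp [single1, hD, hk] <;> ring
    rw [this, kendall_add, Finset.sum_apply]
    exact Finset.sum_congr rfl fun j _ => by simp [hA, hB, mul_assoc]
  have hAi : ∀ k, Integrable (A k) μ := fun k => integrable_kendall (hXint s) _ k
  have hBi : ∀ k, Integrable (B k) μ := fun k => integrable_kendall hDint _ k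
  have hABi : ∀ i j, Integrable (A i * B j) μ := fun i j =>
    (hInd.comp (measurable_kendall (-(c s)) i)
      (measurable_kendall (-(c t - c s)) j)).integrable_mul (hAi i) (hBi j)
  have hAm : ∀ k, StronglyMeasurable[ℱ s] (A k) := fun k => Measurable.stronglyMeasurable
    ((measurable_kendall (-(c s)) k).comp (hAd s))
  have hBm : ∀ k, StronglyMeasurable[MeasurableSpace.comap D inferInstance] (B k) := fun k =>
    Measurable.stronglyMeasurable
      ((measurable_kendall (-(c t - c s)) k).comp (comap_measurable D))
  have hBc : ∀ k, μ[B k | ℱ s] =ᵐ[μ] fun _ => if k = 0 then 1 else 0 := by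
    intro k
    refine (condExp_indep_eq hDmeas.comap_le (ℱ.le s) (hBm k) (hindep s t hst)).trans ?_
    refine Eventually.of_forall fun ω => ?_
    by_cases hk : k = 0
    · subst hk
      simp [hB, kendall_zero']
    · simp only [hk, if_false]
      exact integral_kendall hDint _ hDm k hk
  have hterm : ∀ j, μ[(n.choose j : ℝ) • (A j * B (n - j)) | ℱ s] =ᵐ[μ]
      fun ω => (n.choose j : ℝ) * (A j ω * if n - j = 0 then 1 else 0) := by
    intro j
    filter_upwards [condExp_smul (μ := μ) (n.choose j : ℝ) (A j * B (n - j)) (ℱ s),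
      condExp_mul_of_stronglyMeasurable_left (hAm j) (hABi j (n - j)) (hBi (n - j)),
      hBc (n - j)] with ω h1 h2 h3
    rw [h1, Pi.smul_apply, h2, Pi.mul_apply, h3, smul_eq_mul]
  beta_reduce
  rw [hdec]
  have hsum := condExp_finsetSum (μ := μ) (s := Finset.range (n + 1))
    (f := fun j => (n.choose j : ℝ) • (A j * B (n - j)))
    (fun j _ => (hABi j (n - j)).smul _) (ℱ s)
  have hall := ae_all_iff.2 hterm
  filter_upwards [hsum, hall] with ω h1 h2
  rw [h1, Finset.sum_apply, Finset.sum_congr rfl fun j _ => h2 j, Finset.sum_eq_single n]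
  · simp [hA]
  · intro j hj hne
    have : n - j ≠ 0 := by have := Finset.mem_range.mp hj; omega
    simp [this]
  · simp
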